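/- Let λ be a partition, n, m ≥ 1, T ∈ B_λ(n,m), and 1 ≤ i ≤ m−1. Apply the i-bracketing rule to the word w(T), where each position of w(T) corresponds to a unique box of T. Suppose some letter i is unmatched, and let B be the box of T corresponding to the rightmost unmatched letter i; say B carries the entry (k,i). Then the filling T' obtained from T by changing the entry of B from (k,i) to (k,i+1) is again a lexicographic bitableau in B_λ(n,m); moreover a(T') = a(T) and b(T') = b(T) − e_i + e_{i+1} (where e_j is the j-th standard basis vector of ℕ^m). -/

import Mathlib

/-- Lexicographic (weak) order on pairs: `(a,b) ≤ (a',b')` iff `a < a'`, or `a = a'` and `b ≤ b'`. -/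
def lexLe (p q : ℕ × ℕ) : Prop := p.1 < q.1 ∨ (p.1 = q.1 ∧ p.2 ≤ q.2)

/-- Lexicographic strict order on pairs. -/
def lexLt (p q : ℕ × ℕ) : Prop := p.1 < q.1 ∨ (p.1 = q.1 ∧ p.2 < q.2)

/-- `T` (a total function on positions, row & column both 0-indexed) is a lexicographic
bitableau of shape `lam` with entries in `[n] × [m]`: on the cells of `lam`, entries are pairs
in `{1,…,n} × {1,…,m}`, weakly increasing along rows and strictly increasing down columns
for the lexicographic order. -/
def IsBitabT (lam : YoungDiagram) (n m : ℕ) (T : ℕ → ℕ → ℕ × ℕ) : Prop :=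
  (∀ i j, (i, j) ∈ lam → (1 ≤ (T i j).1 ∧ (T i j).1 ≤ n) ∧ (1 ≤ (T i j).2 ∧ (T i j).2 ≤ m)) ∧
  (∀ i j j', (i, j') ∈ lam → j ≤ j' → lexLe (T i j) (T i j')) ∧
  (∀ i i' j, (i', j) ∈ lam → i < i' → lexLt (T i j) (T i' j))

/-- `i`-th entry of the `a`-weight of `T`: the number of boxes whose entry has first coordinate `i`. -/
def aWtT (lam : YoungDiagram) (T : ℕ → ℕ → ℕ × ℕ) (i : ℕ) : ℕ :=
  (lam.cells.filter fun c => (T c.1 c.2).1 = i).card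

/-- `j`-th entry of the `b`-weight of `T`: the number of boxes whose entry has second coordinate `j`. -/
def bWtT (lam : YoungDiagram) (T : ℕ → ℕ → ℕ × ℕ) (j : ℕ) : ℕ :=
  (lam.cells.filter fun c => (T c.1 c.2).2 = j).card

/-- The list of boxes of `T` in sort-by-top reading order: boxes with first coordinate
`k = 1, …, n` in increasing order, within each group rows from bottom to top, left to right
within each row. -/
def wBoxes (lam : YoungDiagram) (n : ℕ) (T : ℕ → ℕ → ℕ × ℕ) : List (ℕ × ℕ) :=
  (List.range n).flatMap fun k =>
    ((List.range (lam.colLen 0)).reverse).flatMap fun r =>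
      ((List.range (lam.rowLen r)).filter fun c => decide ((T r c).1 = k + 1)).map fun c => (r, c)

/-- The sort-by-top reading word `w(T)`: the second coordinates of the boxes, in sort-by-top
reading order. -/
def wWordT (lam : YoungDiagram) (n : ℕ) (T : ℕ → ℕ → ℕ × ℕ) : List ℕ :=
  (wBoxes lam n T).map fun c => (T c.1 c.2).2

/-- Under the `i`-bracketing rule (each letter `i` becomes `)`, each letter `i+1` becomes `(`,
other letters are ignored), the letter at position `p` of `w` is an unmatched `)` (letter `i`):
equivalently, every window of `w` ending at `p` contains strictly more letters `i` than
letters `i+1`. -/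
def UnmatchedClose (w : List ℕ) (i p : ℕ) : Prop :=
  p < w.length ∧ w.getD p 0 = i ∧
    ∀ q, q ≤ p →
      ((w.drop q).take (p + 1 - q)).count (i + 1) < ((w.drop q).take (p + 1 - q)).count i

/-- Under the `i`-bracketing rule, the letter at position `p` of `w` is an unmatched `(`
(letter `i+1`): equivalently, every window of `w` starting at `p` contains strictly more
letters `i+1` than letters `i`. -/
def UnmatchedOpen (w : List ℕ) (i p : ℕ) : Prop :=
  p < w.length ∧ w.getD p 0 = i + 1 ∧
    ∀ q, p ≤ q → q < w.length →
      ((w.drop p).take (q + 1 - p)).count i < ((w.drop p).take (q + 1 - p)).count (i + 1)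

/-!
Raising the letter of `B = (r, c)` from `i` to `i + 1` can only break the tableau conditions at two
neighbours of `B`.

* If the right neighbour carried the same entry `(k, i)`, it would be the next box in reading order,
  hence a further unmatched `i`, contradicting the choice of `B`.
* If the lower neighbour carried `(k, i + 1)`, let `(r, c₀), …, (r, c)` be the boxes of row `r` with
  entry `(k, i)`. Squeezing between rows `r` and `r + 1` shows that `(r + 1, c₀), …, (r + 1, c)` all
  carry `(k, i + 1)`. In the window of `w(T)` from `(r + 1, c₀)` to `B` every letter `i` sits in one
  of the former boxes, and passing to the box just below injects these letters into the letters
  `i + 1` of the window, so the letter of `B` would be matched.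
-/

section SortedLists

variable {α β : Type*} [LinearOrder β] {l : List α} {f : α → β} {p q : ℕ} {A B X : α}

theorem le_iff_le_of_sortedLT_map (hl : (l.map f).SortedLT) (hA : l[q]? = some A)
    (hB : l[p]? = some B) : f A ≤ f B ↔ q ≤ p := by
  obtain ⟨hq, rfl⟩ := List.getElem?_eq_some_iff.1 hA
  obtain ⟨hp, rfl⟩ := List.getElem?_eq_some_iff.1 hB
  rw [← List.getElem_map f (h := by simpa), ← List.getElem_map f (h := by simpa)]
  exact hl.getElem_le_getElem_iff

theorem lt_iff_lt_of_sortedLT_map (hl : (l.map f).SortedLT) (hA : l[q]? = some A)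
    (hB : l[p]? = some B) : f A < f B ↔ q < p := by
  rw [← not_le, ← not_le, le_iff_le_of_sortedLT_map hl hB hA]

theorem mem_take_drop_iff_of_sortedLT_map (hl : (l.map f).SortedLT) (hA : l[q]? = some A)
    (hB : l[p]? = some B) :
    X ∈ (l.drop q).take (p + 1 - q) ↔ X ∈ l ∧ f X ∈ Set.Icc (f A) (f B) := by
  constructor
  · intro hX
    refine ⟨List.mem_of_mem_drop (List.mem_of_mem_take hX), ?_⟩
    obtain ⟨j, hj, hXj⟩ := List.mem_take_iff_getElem.1 hX
    have hX : l[q + j]? = some X := by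
      rw [← List.getElem?_drop, ← hXj]
      exact List.getElem?_eq_getElem _
    exact ⟨(le_iff_le_of_sortedLT_map hl hA hX).2 (by omega),
      (le_iff_le_of_sortedLT_map hl hX hB).2 (by omega)⟩
  · rintro ⟨hXl, hAX, hXB⟩
    obtain ⟨x, hX⟩ := List.mem_iff_getElem?.1 hXl
    have hqx := (le_iff_le_of_sortedLT_map hl hA hX).1 hAX
    have hxp := (le_iff_le_of_sortedLT_map hl hX hB).1 hXB
    refine List.mem_of_getElem? (i := x - q) ?_
    rw [List.getElem?_take_of_lt (by omega), List.getElem?_drop, Nat.add_sub_cancel' hqx, hX]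

theorem getElem?_succ_of_covBy (hl : (l.map f).SortedLT) (hA : l[q]? = some A) (hB : B ∈ l)
    (hAB : f A ⋖ f B) : l[q + 1]? = some B := by
  obtain ⟨p, hB⟩ := List.mem_iff_getElem?.1 hB
  have hqp : q + 1 ≤ p := (lt_iff_lt_of_sortedLT_map hl hA hB).1 hAB.lt
  obtain ⟨hp, -⟩ := List.getElem?_eq_some_iff.1 hB
  have hX : l[q + 1]? = some l[q + 1] := List.getElem?_eq_getElem (by omega)
  have hpq : p ≤ q + 1 := by
    rw [← le_iff_le_of_sortedLT_map hl hB hX, ← not_lt]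
    exact hAB.2 ((lt_iff_lt_of_sortedLT_map hl hA hX).2 q.lt_succ_self)
  rwa [le_antisymm hqp hpq]

end SortedLists

theorem card_filter_eq_add_ite_of_forall_ne {α β : Type*} [DecidableEq β] {s : Finset α}
    {f g : α → β} {a : α} (ha : a ∈ s) (hfg : ∀ x ≠ a, g x = f x) (b : β) :
    (s.filter fun x => g x = b).card + (if f a = b then 1 else 0) =
      (s.filter fun x => f x = b).card + (if g a = b then 1 else 0) := by
  classical
  have hsum : ∑ x ∈ s.erase a, (if g x = b then 1 else 0) =
      ∑ x ∈ s.erase a, (if f x = b then 1 else 0) :=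
    Finset.sum_congr rfl fun x hx => by rw [hfg x (Finset.ne_of_mem_erase hx)]
  rw [Finset.card_filter, Finset.card_filter, ← Finset.add_sum_erase s _ ha,
    ← Finset.add_sum_erase s _ ha, hsum]
  omega

section LexOrder

variable {x y z : ℕ × ℕ}

theorem lexLe_iff_toLex_le : lexLe x y ↔ toLex x ≤ toLex y :=
  Prod.Lex.toLex_le_toLex.symm

theorem lexLt_iff_toLex_lt : lexLt x y ↔ toLex x < toLex y :=
  Prod.Lex.toLex_lt_toLex.symm

theorem lexLe.trans (hxy : lexLe x y) (hyz : lexLe y z) : lexLe x z := by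
  rw [lexLe_iff_toLex_le] at *
  exact hxy.trans hyz

theorem lexLe.trans_lexLt (hxy : lexLe x y) (hyz : lexLt y z) : lexLt x z := by
  rw [lexLe_iff_toLex_le, lexLt_iff_toLex_lt] at *
  exact hxy.trans_lt hyz

theorem lexLt.trans_lexLe (hxy : lexLt x y) (hyz : lexLe y z) : lexLt x z := by
  rw [lexLe_iff_toLex_le, lexLt_iff_toLex_lt] at *
  exact hxy.trans_le hyz

theorem lexLt.lexLe (h : lexLt x y) : lexLe x y := by
  rw [lexLe_iff_toLex_le, lexLt_iff_toLex_lt] at *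
  exact h.le

theorem lexLe.antisymm (hxy : lexLe x y) (hyx : lexLe y x) : x = y := by
  rw [lexLe_iff_toLex_le] at *
  exact toLex.injective (le_antisymm hxy hyx)

theorem lexLe.lexLt_of_ne (h : lexLe x y) (hne : x ≠ y) : lexLt x y := by
  rw [lexLe_iff_toLex_le, lexLt_iff_toLex_lt] at *
  exact h.lt_of_ne (toLex.injective.ne hne)

theorem lexLt_iff_lexLe_succ : lexLt x y ↔ lexLe (x.1, x.2 + 1) y :=
  Iff.rfl

end LexOrder

section ReplaceEntry

variable {lam : YoungDiagram} {n m r c : ℕ} {T : ℕ → ℕ → ℕ × ℕ} {B v : ℕ × ℕ}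

/-- The filling obtained from `T` by changing the entry of the box `B` to `v`. -/
def replaceEntry (T : ℕ → ℕ → ℕ × ℕ) (B v : ℕ × ℕ) : ℕ → ℕ → ℕ × ℕ :=
  fun r c => if (r, c) = B then v else T r c

theorem replaceEntry_self : replaceEntry T (r, c) v r c = v :=
  if_pos rfl

theorem replaceEntry_of_ne (h : (r, c) ≠ B) : replaceEntry T B v r c = T r c :=
  if_neg h

theorem aWtT_replaceEntry (hB : B ∈ lam) (hv : v.1 = (T B.1 B.2).1) (k : ℕ) :
    aWtT lam (replaceEntry T B v) k = aWtT lam T k := by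
  have h := card_filter_eq_add_ite_of_forall_ne (f := fun X : ℕ × ℕ => (T X.1 X.2).1)
    (g := fun X => (replaceEntry T B v X.1 X.2).1) ((YoungDiagram.mem_cells B).2 hB)
    (fun X hX => by rw [replaceEntry_of_ne hX]) k
  rw [replaceEntry_self, hv] at h
  exact Nat.add_right_cancel h

theorem bWtT_replaceEntry_add (hB : B ∈ lam) (j : ℕ) :
    bWtT lam (replaceEntry T B v) j + (if (T B.1 B.2).2 = j then 1 else 0) =
      bWtT lam T j + (if v.2 = j then 1 else 0) := by
  have h := card_filter_eq_add_ite_of_forall_ne (f := fun X : ℕ × ℕ => (T X.1 X.2).2)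
    (g := fun X => (replaceEntry T B v X.1 X.2).2) ((YoungDiagram.mem_cells B).2 hB)
    (fun X hX => by rw [replaceEntry_of_ne hX]) j
  rwa [replaceEntry_self] at h

theorem IsBitabT.replaceEntry_of_neighbors (hT : IsBitabT lam n m T)
    (hv : (1 ≤ v.1 ∧ v.1 ≤ n) ∧ (1 ≤ v.2 ∧ v.2 ≤ m)) (hle : lexLe (T r c) v)
    (hright : (r, c + 1) ∈ lam → lexLe v (T r (c + 1)))
    (hbelow : (r + 1, c) ∈ lam → lexLt v (T (r + 1) c)) :
    IsBitabT lam n m (replaceEntry T (r, c) v) := by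
  obtain ⟨hrange, hrow, hcol⟩ := hT
  refine ⟨fun s d hsd => ?_, fun s d d' hsd' hdd' => ?_, fun s s' d hs'd hss' => ?_⟩
  · by_cases hB : (s, d) = (r, c)
    · obtain ⟨rfl, rfl⟩ := Prod.mk.inj hB
      rwa [replaceEntry_self]
    · rw [replaceEntry_of_ne hB]
      exact hrange s d hsd
  · obtain rfl | hlt := hdd'.eq_or_lt
    · exact Or.inr ⟨rfl, le_rfl⟩
    by_cases hB : (s, d) = (r, c)
    · obtain ⟨rfl, rfl⟩ := Prod.mk.inj hB
      rw [replaceEntry_self, replaceEntry_of_ne (by simpa using hlt.ne')]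
      exact (hright (lam.up_left_mem le_rfl hlt hsd')).trans (hrow s (d + 1) d' hsd' hlt)
    rw [replaceEntry_of_ne hB]
    by_cases hB' : (s, d') = (r, c)
    · obtain ⟨rfl, rfl⟩ := Prod.mk.inj hB'
      rw [replaceEntry_self]
      exact (hrow s d d' hsd' hdd').trans hle
    · rw [replaceEntry_of_ne hB']
      exact hrow s d d' hsd' hdd'
  · by_cases hB : (s, d) = (r, c)
    · obtain ⟨rfl, rfl⟩ := Prod.mk.inj hB
      rw [replaceEntry_self, replaceEntry_of_ne (by simpa using hss'.ne')]
      have hv_below := hbelow (lam.up_left_mem hss' le_rfl hs'd)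
      obtain rfl | hlt := (Nat.succ_le_of_lt hss').eq_or_lt
      · exact hv_below
      · exact hv_below.trans_lexLe (hcol (s + 1) s' d hs'd hlt).lexLe
    rw [replaceEntry_of_ne hB]
    by_cases hB' : (s', d) = (r, c)
    · obtain ⟨rfl, rfl⟩ := Prod.mk.inj hB'
      rw [replaceEntry_self]
      exact (hcol s s' d hs'd hss').trans_lexLe hle
    · rw [replaceEntry_of_ne hB']
      exact hcol s s' d hs'd hss'

end ReplaceEntry

section ReadingOrder

open OrderDual

variable {lam : YoungDiagram} {n m : ℕ} {T : ℕ → ℕ → ℕ × ℕ} {r c : ℕ} {X Y A B : ℕ × ℕ}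

/-- The position of a box in the sort-by-top reading order: boxes are compared by first coordinate
of the entry, then by row from the bottom up (hence the order dual), then by column. -/
def readingKey (T : ℕ → ℕ → ℕ × ℕ) (X : ℕ × ℕ) : ℕ ×ₗ ℕᵒᵈ ×ₗ ℕ :=
  toLex ((T X.1 X.2).1, toLex (toDual X.1, X.2))

theorem readingKey_lt_iff : readingKey T X < readingKey T Y ↔
    (T X.1 X.2).1 < (T Y.1 Y.2).1 ∨
      (T X.1 X.2).1 = (T Y.1 Y.2).1 ∧ (Y.1 < X.1 ∨ X.1 = Y.1 ∧ X.2 < Y.2) := by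
  simp only [readingKey, Prod.Lex.toLex_lt_toLex, toDual_lt_toDual, EmbeddingLike.apply_eq_iff_eq]

theorem readingKey_le_iff : readingKey T X ≤ readingKey T Y ↔
    (T X.1 X.2).1 < (T Y.1 Y.2).1 ∨
      (T X.1 X.2).1 = (T Y.1 Y.2).1 ∧ (Y.1 < X.1 ∨ X.1 = Y.1 ∧ X.2 ≤ Y.2) := by
  simp only [readingKey, Prod.Lex.toLex_le_toLex, toDual_lt_toDual, EmbeddingLike.apply_eq_iff_eq]

theorem readingKey_covBy_right (h : (T r (c + 1)).1 = (T r c).1) :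
    readingKey T (r, c) ⋖ readingKey T (r, c + 1) := by
  simp only [readingKey, h, Prod.Lex.toLex_covBy_toLex_iff, Nat.covBy_iff_add_one_eq, true_and,
    true_or]

theorem sortedLT_map_readingKey_wBoxes (lam : YoungDiagram) (n : ℕ) (T : ℕ → ℕ → ℕ × ℕ) :
    ((wBoxes lam n T).map (readingKey T)).SortedLT := by
  rw [List.sortedLT_iff_pairwise, List.pairwise_map, wBoxes, List.pairwise_flatMap]
  refine ⟨fun k _ => List.pairwise_flatMap.2 ⟨fun r _ => ?_, ?_⟩, ?_⟩
  · refine List.pairwise_map.2 ((List.pairwise_lt_range.filter _).imp_of_mem ?_)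
    intro c d hc hd hcd
    simp only [List.mem_filter, decide_eq_true_eq] at hc hd
    exact readingKey_lt_iff.2 (Or.inr ⟨hc.2.trans hd.2.symm, Or.inr ⟨rfl, hcd⟩⟩)
  · refine List.pairwise_reverse.2 (List.pairwise_lt_range.imp fun hsr X hX Y hY => ?_)
    simp only [List.mem_map, List.mem_filter, decide_eq_true_eq] at hX hY
    obtain ⟨c, ⟨-, hc⟩, rfl⟩ := hX
    obtain ⟨d, ⟨-, hd⟩, rfl⟩ := hY
    exact readingKey_lt_iff.2 (Or.inr ⟨hc.trans hd.symm, Or.inl hsr⟩)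
  · refine List.pairwise_lt_range.imp fun hkl X hX Y hY => ?_
    simp only [List.mem_flatMap, List.mem_map, List.mem_filter, decide_eq_true_eq] at hX hY
    obtain ⟨r, -, c, ⟨-, hc⟩, rfl⟩ := hX
    obtain ⟨s, -, d, ⟨-, hd⟩, rfl⟩ := hY
    exact readingKey_lt_iff.2 (Or.inl (by simpa only [hc, hd] using Nat.succ_lt_succ hkl))

theorem mem_wBoxes_iff :
    X ∈ wBoxes lam n T ↔ X ∈ lam ∧ 1 ≤ (T X.1 X.2).1 ∧ (T X.1 X.2).1 ≤ n := by
  obtain ⟨r, c⟩ := X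
  simp only [wBoxes, List.mem_flatMap, List.mem_map, List.mem_filter, decide_eq_true_eq,
    List.mem_range, List.mem_reverse, Prod.mk.injEq]
  constructor
  · rintro ⟨k, hk, r, -, c, ⟨hc, hTk⟩, rfl, rfl⟩
    exact ⟨YoungDiagram.mem_iff_lt_rowLen.2 hc, by omega, by omega⟩
  · rintro ⟨hrc, hpos, hle⟩
    have hr : r < lam.colLen 0 :=
      YoungDiagram.mem_iff_lt_colLen.1 (lam.up_left_mem le_rfl c.zero_le hrc)
    exact ⟨(T r c).1 - 1, by omega, r, hr, c,
      ⟨YoungDiagram.mem_iff_lt_rowLen.1 hrc, by omega⟩, rfl, rfl⟩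

theorem IsBitabT.mem_wBoxes (hT : IsBitabT lam n m T) : X ∈ wBoxes lam n T ↔ X ∈ lam :=
  mem_wBoxes_iff.trans (and_iff_left_of_imp fun hX => (hT.1 X.1 X.2 hX).1)

/-- The boxes of `lam` that carry the letter `j` and lie weakly between `A` and `B` in reading
order; they are the occurrences of `j` in the window of the reading word from `A` to `B`. -/
def letterBoxes (lam : YoungDiagram) (T : ℕ → ℕ → ℕ × ℕ) (A B : ℕ × ℕ) (j : ℕ) :
    Finset (ℕ × ℕ) :=
  lam.cells.filter fun X =>
    (readingKey T A ≤ readingKey T X ∧ readingKey T X ≤ readingKey T B) ∧ (T X.1 X.2).2 = j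

theorem mem_letterBoxes {j : ℕ} : X ∈ letterBoxes lam T A B j ↔
    X ∈ lam ∧ (readingKey T A ≤ readingKey T X ∧ readingKey T X ≤ readingKey T B) ∧
      (T X.1 X.2).2 = j := by
  rw [letterBoxes, Finset.mem_filter, YoungDiagram.mem_cells]

theorem IsBitabT.count_window (hT : IsBitabT lam n m T) {p q : ℕ}
    (hA : (wBoxes lam n T)[q]? = some A) (hB : (wBoxes lam n T)[p]? = some B) (j : ℕ) :
    (((wWordT lam n T).drop q).take (p + 1 - q)).count j = (letterBoxes lam T A B j).card := by
  have hsorted := sortedLT_map_readingKey_wBoxes lam n T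
  have hnodup : (((wBoxes lam n T).drop q).take (p + 1 - q)).Nodup :=
    hsorted.nodup.of_map.sublist ((List.take_sublist _ _).trans (List.drop_sublist _ _))
  rw [wWordT, ← List.map_drop, ← List.map_take, List.count, List.countP_map,
    List.countP_eq_length_filter, ← List.toFinset_card_of_nodup (hnodup.filter _)]
  congr 1
  ext X
  simp only [List.mem_toFinset, List.mem_filter, mem_letterBoxes, Function.comp_apply,
    beq_iff_eq, mem_take_drop_iff_of_sortedLT_map hsorted hA hB, hT.mem_wBoxes, Set.mem_Icc,
    and_assoc]

end ReadingOrder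

section Unmatched

variable {lam : YoungDiagram} {n m : ℕ} {T : ℕ → ℕ → ℕ × ℕ} {r c i p : ℕ} {A B X : ℕ × ℕ}

theorem UnmatchedClose.succ {w : List ℕ} (hp : UnmatchedClose w i p)
    (hsucc : w[p + 1]? = some i) : UnmatchedClose w i (p + 1) := by
  refine ⟨(List.getElem?_eq_some_iff.1 hsucc).1, by simp [hsucc], fun q hq => ?_⟩
  have hwindow : (w.drop q).take (p + 1 + 1 - q) = (w.drop q).take (p + 1 - q) ++ [i] := by
    rw [Nat.succ_sub hq, List.take_add_one, List.getElem?_drop, Nat.add_sub_cancel' hq, hsucc,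
      Option.toList_some]
  have hle : ((w.drop q).take (p + 1 - q)).count (i + 1) ≤
      ((w.drop q).take (p + 1 - q)).count i := by
    obtain hqp | rfl := Nat.le_succ_iff.1 hq
    · exact (hp.2.2 q hqp).le
    · simp
  rw [hwindow, List.count_append, List.count_append, List.count_singleton_self,
    List.count_eq_zero.2 (by simp : i + 1 ∉ [i])]
  omega

theorem UnmatchedClose.letter_eq (hp : UnmatchedClose (wWordT lam n T) i p)
    (hB : (wBoxes lam n T)[p]? = some B) : (T B.1 B.2).2 = i := by
  simpa [wWordT, hB] using hp.2.1

theorem UnmatchedClose.card_letterBoxes_lt (hp : UnmatchedClose (wWordT lam n T) i p)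
    (hT : IsBitabT lam n m T) (hB : (wBoxes lam n T)[p]? = some B) (hA : A ∈ lam)
    (hAB : readingKey T A ≤ readingKey T B) :
    (letterBoxes lam T A B (i + 1)).card < (letterBoxes lam T A B i).card := by
  obtain ⟨q, hq⟩ := List.mem_iff_getElem?.1 (hT.mem_wBoxes.2 hA)
  have hqp := (le_iff_le_of_sortedLT_map (sortedLT_map_readingKey_wBoxes lam n T) hq hB).1 hAB
  rw [← hT.count_window hq hB, ← hT.count_window hq hB]
  exact hp.2.2 q hqp

theorem UnmatchedClose.right_ne (hp : UnmatchedClose (wWordT lam n T) i p)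
    (hlast : ¬ UnmatchedClose (wWordT lam n T) i (p + 1)) (hT : IsBitabT lam n m T)
    (hB : (wBoxes lam n T)[p]? = some (r, c)) (hmem : (r, c + 1) ∈ lam) :
    T r c ≠ T r (c + 1) := by
  intro heq
  have hnext : (wBoxes lam n T)[p + 1]? = some (r, c + 1) :=
    getElem?_succ_of_covBy (sortedLT_map_readingKey_wBoxes lam n T) hB
      (hT.mem_wBoxes.2 hmem) (readingKey_covBy_right (by rw [heq]))
  have hletter : (wWordT lam n T)[p + 1]? = some i := by
    rw [wWordT, List.getElem?_map, hnext, Option.map_some, ← hp.letter_eq hB, heq]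
  exact hlast (hp.succ hletter)

theorem IsBitabT.below_eq_of_eq (hT : IsBitabT lam n m T) {j : ℕ} (hmem : (r + 1, c) ∈ lam)
    (hbelow : T (r + 1) c = ((T r c).1, (T r c).2 + 1)) (hj : j ≤ c) (heq : T r j = T r c) :
    T (r + 1) j = ((T r c).1, (T r c).2 + 1) := by
  have hcol := hT.2.2 r (r + 1) j (lam.up_left_mem le_rfl hj hmem) r.lt_succ_self
  have hrow := hT.2.1 (r + 1) j c hmem hj
  rw [lexLt_iff_lexLe_succ, heq] at hcol
  rw [hbelow] at hrow
  exact hrow.antisymm hcol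

theorem IsBitabT.mem_row_of_mem_letterBoxes (hT : IsBitabT lam n m T) {c₀ : ℕ}
    (hc₀ : T (r + 1) c₀ = ((T r c).1, (T r c).2 + 1))
    (hX : X ∈ letterBoxes lam T (r + 1, c₀) (r, c) (T r c).2) :
    X.1 = r ∧ X.2 ≤ c ∧ T X.1 X.2 = T r c := by
  obtain ⟨hXlam, ⟨hAX, hXB⟩, hletter⟩ := mem_letterBoxes.1 hX
  rw [readingKey_le_iff] at hAX hXB
  simp only [hc₀] at hAX hXB
  have hfst : (T X.1 X.2).1 = (T r c).1 := by omega
  have hnot_below : ¬ (X.1 = r + 1 ∧ c₀ ≤ X.2) := by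
    rintro ⟨hrow, hcol⟩
    have hle := hT.2.1 X.1 c₀ X.2 hXlam hcol
    rw [hrow, hc₀, ← hrow, lexLe] at hle
    omega
  exact ⟨by omega, by omega, Prod.ext hfst hletter⟩

theorem IsBitabT.card_letterBoxes_le (hT : IsBitabT lam n m T) {c₀ : ℕ}
    (hmem : (r + 1, c) ∈ lam) (hbelow : T (r + 1) c = ((T r c).1, (T r c).2 + 1))
    (hc₀ : c₀ ≤ c) (heq : T r c₀ = T r c) (hfirst : ∀ j, T r j = T r c → c₀ ≤ j) :
    (letterBoxes lam T (r + 1, c₀) (r, c) (T r c).2).card ≤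
      (letterBoxes lam T (r + 1, c₀) (r, c) ((T r c).2 + 1)).card := by
  have hbelow₀ := hT.below_eq_of_eq hmem hbelow hc₀ heq
  refine Finset.card_le_card_of_injOn (fun X => (X.1 + 1, X.2)) ?_ ?_
  · rintro ⟨s, j⟩ hX
    obtain ⟨rfl, hj, hTj⟩ := hT.mem_row_of_mem_letterBoxes hbelow₀ hX
    have hbelow_j := hT.below_eq_of_eq hmem hbelow hj hTj
    refine mem_letterBoxes.2 ⟨lam.up_left_mem le_rfl hj hmem, ⟨?_, ?_⟩, by rw [hbelow_j]⟩
    · exact readingKey_le_iff.2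
        (Or.inr ⟨by rw [hbelow₀, hbelow_j], Or.inr ⟨rfl, hfirst j hTj⟩⟩)
    · exact readingKey_le_iff.2 (Or.inr ⟨by rw [hbelow_j], Or.inl s.lt_succ_self⟩)
  · rintro ⟨s, j⟩ - ⟨s', j'⟩ - h
    simpa using h

theorem UnmatchedClose.below_ne (hp : UnmatchedClose (wWordT lam n T) i p)
    (hT : IsBitabT lam n m T) (hB : (wBoxes lam n T)[p]? = some (r, c))
    (hmem : (r + 1, c) ∈ lam) : ((T r c).1, (T r c).2 + 1) ≠ T (r + 1) c := by
  intro hbelow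
  classical
  have hex : ∃ j, T r j = T r c := ⟨c, rfl⟩
  obtain ⟨c₀, heq, hfirst⟩ : ∃ c₀, T r c₀ = T r c ∧ ∀ j, T r j = T r c → c₀ ≤ j :=
    ⟨Nat.find hex, Nat.find_spec hex, fun j => Nat.find_min' hex⟩
  have hc₀ : c₀ ≤ c := hfirst c rfl
  have hAB : readingKey T (r + 1, c₀) ≤ readingKey T (r, c) := by
    have hbelow₀ := hT.below_eq_of_eq hmem hbelow.symm hc₀ heq
    exact readingKey_le_iff.2 (Or.inr ⟨by rw [hbelow₀], Or.inl r.lt_succ_self⟩)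
  have hlt := hp.card_letterBoxes_lt hT hB (lam.up_left_mem le_rfl hc₀ hmem) hAB
  rw [← hp.letter_eq hB] at hlt
  exact hlt.not_ge (hT.card_letterBoxes_le hmem hbelow.symm hc₀ heq hfirst)

theorem IsBitabT.replaceEntry_of_unmatchedClose (hT : IsBitabT lam n m T) (him : i + 1 ≤ m)
    (hp : UnmatchedClose (wWordT lam n T) i p)
    (hlast : ¬ UnmatchedClose (wWordT lam n T) i (p + 1)) (hB : (wBoxes lam n T)[p]? = some B) :
    IsBitabT lam n m (replaceEntry T B ((T B.1 B.2).1, i + 1)) := by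
  have hmem : B ∈ lam := hT.mem_wBoxes.1 (List.mem_of_getElem? hB)
  obtain rfl : (T B.1 B.2).2 = i := hp.letter_eq hB
  refine hT.replaceEntry_of_neighbors ⟨(hT.1 _ _ hmem).1, Nat.succ_pos _, him⟩
    (Or.inr ⟨rfl, Nat.le_succ _⟩) (fun hright => ?_) (fun hbelow => ?_)
  · have hle := hT.2.1 B.1 B.2 (B.2 + 1) hright (Nat.le_succ _)
    exact lexLt_iff_lexLe_succ.1 (hle.lexLt_of_ne (hp.right_ne hlast hT hB hright))
  · have hlt := hT.2.2 B.1 (B.1 + 1) B.2 hbelow (Nat.lt_succ_self _)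
    exact (lexLt_iff_lexLe_succ.1 hlt).lexLt_of_ne (hp.below_ne hT hB hbelow)

end Unmatched

/-- lowering operators are well defined. Let `T ∈ B_λ(n,m)` and
`1 ≤ i ≤ m-1`. Suppose under the `i`-bracketing rule applied to `w(T)` some letter `i` is
unmatched, let `B` be the box of `T` corresponding to the rightmost unmatched letter `i`,
and let `T'` be obtained from `T` by changing the entry `(k, i)` of `B` to `(k, i+1)`. Then
`T' ∈ B_λ(n,m)`, `a(T') = a(T)`, and `b(T') = b(T) − e_i + e_{i+1}`. -/
theorem stmt_4 (lam : YoungDiagram) (n m : ℕ) (hn : 1 ≤ n) (hm : 1 ≤ m)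
    (T : ℕ → ℕ → ℕ × ℕ) (hT : IsBitabT lam n m T)
    (i : ℕ) (hi1 : 1 ≤ i) (hi2 : i ≤ m - 1)
    (p : ℕ) (hp : UnmatchedClose (wWordT lam n T) i p)
    (hrightmost : ∀ p', p < p' → ¬ UnmatchedClose (wWordT lam n T) i p')
    (B : ℕ × ℕ) (hB : B = (wBoxes lam n T).getD p (0, 0))
    (T' : ℕ → ℕ → ℕ × ℕ)
    (hT' : T' = fun r c => if (r, c) = B then ((T B.1 B.2).1, i + 1) else T r c) :
    IsBitabT lam n m T' ∧
    (∀ k, aWtT lam T' k = aWtT lam T k) ∧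
    (∀ j, bWtT lam T' j =
      if j = i then bWtT lam T j - 1 else if j = i + 1 then bWtT lam T j + 1
      else bWtT lam T j) := by
  have hpB : (wBoxes lam n T)[p]? = some B := by
    have hlen : p < (wBoxes lam n T).length := by simpa only [wWordT, List.length_map] using hp.1
    rw [hB, List.getD_eq_getElem _ _ hlen, List.getElem?_eq_getElem hlen]
  have hBlam : B ∈ lam := hT.mem_wBoxes.1 (List.mem_of_getElem? hpB)
  have hletter : (T B.1 B.2).2 = i := hp.letter_eq hpB
  obtain rfl : T' = replaceEntry T B ((T B.1 B.2).1, i + 1) := hT'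
  refine ⟨hT.replaceEntry_of_unmatchedClose (by omega) hp (hrightmost _ p.lt_succ_self) hpB,
    aWtT_replaceEntry hBlam rfl, fun j => ?_⟩
  have hweight := bWtT_replaceEntry_add (T := T) (v := ((T B.1 B.2).1, i + 1)) hBlam j
  rw [hletter] at hweight
  split_ifs at hweight ⊢ <;> omega
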